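/- (Control of the energy characteristic by Hilbert transform testing and the offset Muckenhoupt characteristic.) There is a universal constant C such that for all positive locally finite Borel measures σ, ω on ℝ, ℰ₂(σ,ω)² ≤ C·(𝔗_H(σ,ω)² + A₂^offset(σ,ω)). -/

import Mathlib

open MeasureTheory Set
open scoped ENNReal Classical

noncomputable section

/-- A dyadic interval `[n·2^k, (n+1)·2^k)`. -/
structure DI where
  k : ℤ
  n : ℤ

namespace DI

/-- The underlying set of a dyadic interval. -/
def set (I : DI) : Set ℝ := Set.Ico ((I.n : ℝ) * (2:ℝ) ^ I.k) (((I.n : ℝ) + 1) * (2:ℝ) ^ I.k)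

/-- The side length `ℓ(I)`. -/
def len (I : DI) : ℝ := (2:ℝ) ^ I.k

/-- left endpoint -/
def lo (I : DI) : ℝ := (I.n : ℝ) * (2:ℝ) ^ I.k

/-- right endpoint -/
def hi (I : DI) : ℝ := ((I.n : ℝ) + 1) * (2:ℝ) ^ I.k

/-- center `c_I` -/
def center (I : DI) : ℝ := ((I.n : ℝ) + 1/2) * (2:ℝ) ^ I.k

/-- left dyadic child -/
def left (I : DI) : DI := ⟨I.k - 1, 2 * I.n⟩

/-- right dyadic child -/
def right (I : DI) : DI := ⟨I.k - 1, 2 * I.n + 1⟩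

/-- parent interval -/
def parent (I : DI) : DI := ⟨I.k + 1, Int.fdiv I.n 2⟩

/-- m-th ancestor `π^m I` -/
def anc (I : DI) : ℕ → DI
  | 0 => I
  | (m+1) => (anc I m).parent

/-- distance of `J ⊆ K` to the boundary of `K` -/
def distToBdry (J K : DI) : ℝ := min (J.lo - K.lo) (K.hi - J.hi)

/-- the child of `I` containing `J` (for `J ⊆ I` strictly) -/
def childContaining (I J : DI) : DI := if J.set ⊆ I.left.set then I.left else I.right

/-- the sibling `θ(I_J)` of the child of `I` containing `J` -/
def sibling (I J : DI) : DI := if J.set ⊆ I.left.set then I.right else I.left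

end DI

/-- `J` is an `(r,ε)`-good dyadic interval. -/
def IsGood (r : ℕ) (ε : ℝ) (J : DI) : Prop :=
  ∀ K : DI, J.set ⊆ K.set → (2:ℝ) ^ r * J.len ≤ K.len →
    J.len ^ ε * K.len ^ (1 - ε) / 2 ≤ DI.distToBdry J K

/-- Poisson integral of `μ` relative to an interval with center `c` and length `ℓ`. -/
def poissonI (c ℓ : ℝ) (μ : Measure ℝ) : ℝ≥0∞ :=
  ∫⁻ y, ENNReal.ofReal (ℓ / (ℓ + |y - c|) ^ 2) ∂μ

/-- Poisson integral `P(I, μ)` for a dyadic interval. -/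
def DI.poisson (I : DI) (μ : Measure ℝ) : ℝ≥0∞ := poissonI I.center I.len μ

/-- average `E^μ_K f = (1/|K|_μ) ∫_K f dμ` -/
def avg (μ : Measure ℝ) (K : Set ℝ) (f : ℝ → ℝ) : ℝ := (∫ x in K, f x ∂μ) / (μ K).toReal

/-- martingale (Haar) difference `Δ_I^μ f` -/
def haar (μ : Measure ℝ) (I : DI) (f : ℝ → ℝ) : ℝ → ℝ := fun x =>
  (I.left.set.indicator (fun _ => avg μ I.left.set f)) x
    + (I.right.set.indicator (fun _ => avg μ I.right.set f)) x
    - (I.set.indicator (fun _ => avg μ I.set f)) x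

/-- truncated Hilbert transform `H_t(f σ)(x)` -/
def Htr (σ : Measure ℝ) (f : ℝ → ℝ) (t : ℝ) (x : ℝ) : ℝ :=
  ∫ y in {y : ℝ | t < |y - x|}, f y / (y - x) ∂σ

/-- pairing `⟨H_t(f σ), ψ⟩_{L²(ω)}` -/
def pairH (σ ω : Measure ℝ) (f ψ : ℝ → ℝ) (t : ℝ) : ℝ :=
  ∫ x, Htr σ f t x * ψ x ∂ω

/-- testing characteristic `𝔗_H(σ, ω)`, uniform over truncations -/
def testH (σ ω : Measure ℝ) : ℝ≥0∞ :=
  ⨆ (a : ℝ) (b : ℝ) (_ : a < b) (t : ℝ) (_ : 0 < t),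
    eLpNorm (Htr σ ((Set.Ico a b).indicator 1) t) 2 ω / (σ (Set.Ico a b)) ^ (1/2 : ℝ)

/-- operator norm characteristic `𝔑_H(σ, ω)`, uniform over truncations -/
def normH (σ ω : Measure ℝ) : ℝ≥0∞ :=
  ⨆ (t : ℝ) (_ : 0 < t) (f : ℝ → ℝ) (_ : MeasureTheory.MemLp f 2 σ),
    eLpNorm (Htr σ f t) 2 ω / eLpNorm f 2 σ

/-- two-tailed Muckenhoupt characteristic with holes `𝒜₂^hole(σ, ω)` -/
def A2hole (σ ω : Measure ℝ) : ℝ≥0∞ :=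
  ⨆ (a : ℝ) (b : ℝ) (_ : a < b),
    poissonI ((a+b)/2) (b-a) (ω.restrict (Set.Ico a b)ᶜ) * σ (Set.Ico a b) / ENNReal.ofReal (b-a)
      + ω (Set.Ico a b) / ENNReal.ofReal (b-a) * poissonI ((a+b)/2) (b-a) (σ.restrict (Set.Ico a b)ᶜ)

/-- offset Muckenhoupt characteristic `A₂^offset(σ, ω)` with parameter `r` -/
def A2offset (r : ℕ) (σ ω : Measure ℝ) : ℝ≥0∞ :=
  ⨆ (Q : DI) (Q' : DI) (_ : Disjoint Q.set Q'.set)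
    (_ : ¬ Disjoint (closure Q.set) (closure Q'.set))
    (_ : Q'.len ≤ (2:ℝ) ^ r * Q.len) (_ : Q.len ≤ (2:ℝ) ^ r * Q'.len),
    (ω Q'.set / ENNReal.ofReal Q'.len) * (σ Q.set / ENNReal.ofReal Q.len)

/-- energy `E(J,ω)²` -/
def energySq (ω : Measure ℝ) (J : DI) : ℝ≥0∞ :=
  (∫⁻ x in J.set, ENNReal.ofReal ((x - avg ω J.set (fun z => z)) ^ 2) ∂ω)
    / (ω J.set * ENNReal.ofReal (J.len ^ 2))

/-- energy characteristic `ℰ₂(σ,ω)²` -/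
def energyCharSq (σ ω : Measure ℝ) : ℝ≥0∞ :=
  ⨆ (a : ℝ) (b : ℝ) (_ : a < b) (𝒮 : Set DI)
    (_ : ∀ I ∈ 𝒮, DI.set I ⊆ Set.Ico a b)
    (_ : 𝒮.Pairwise fun I I' => Disjoint I.set I'.set),
    (∑' I : 𝒮, (I : DI).poisson (σ.restrict (Set.Ico a b \ (I : DI).set)) ^ 2
        * energySq ω (I : DI) * ω (I : DI).set) / σ (Set.Ico a b)

/-- `ℱ`-children: maximal members of `ℱ` strictly contained in `F` -/
def fChildren (ℱ : Set DI) (F : DI) : Set DI :=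
  {G | G ∈ ℱ ∧ G.set ⊂ F.set ∧ ∀ H ∈ ℱ, H.set ⊂ F.set → G.set ⊆ H.set → H = G}

/-- m-fold iterated `ℱ`-children -/
def fDesc (ℱ : Set DI) : ℕ → DI → Set DI
  | 0, F => {F}
  | (m+1), F => ⋃ G ∈ fChildren ℱ F, fDesc ℱ m G

/-- the corona `𝒞_ℱ(F)` -/
def corona (ℱ : Set DI) (F : DI) : Set DI :=
  {I | I.set ⊆ F.set ∧ ∀ F' ∈ ℱ, F'.set ⊂ F.set → ¬ I.set ⊆ F'.set}

/-- `ℱ` is σ-Carleson with norm `Cℱ` -/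
def IsCarleson (σ : Measure ℝ) (ℱ : Set DI) (Cℱ : ℝ) : Prop :=
  ∀ S ∈ ℱ, ∑' F : {F : DI // F ∈ ℱ ∧ F.set ⊆ S.set}, σ (F : DI).set
    ≤ ENNReal.ofReal Cℱ * σ S.set

/-- `W` is `(r,ε)`-deeply embedded in `F` -/
def deepIn (r : ℕ) (ε : ℝ) (W F : DI) : Prop :=
  W.set ⊆ F.set ∧ W.len ≤ (2:ℝ) ^ (-(r:ℤ)) * F.len ∧
    W.len ^ ε * F.len ^ (1 - ε) / 2 ≤ DI.distToBdry W F

/-- the `(r,ε)`-Whitney collection `ℳ_{(r,ε)-deep}(F)` -/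
def Mdeep (r : ℕ) (ε : ℝ) (F : DI) : Set DI :=
  {W | deepIn r ε W F ∧ ∀ W' : DI, deepIn r ε W' F → W.set ⊆ W'.set → W' = W}

/-- pointwise Haar projection of the identity function onto a collection `𝒮` -/
def projId (ω : Measure ℝ) (𝒮 : Set DI) : ℝ → ℝ :=
  fun x => ∑' J : 𝒮, haar ω (J : DI) (fun z => z) x

/-- functional energy characteristic `𝔉(σ, ω)` -/
def funcEnergy (r : ℕ) (ε : ℝ) (σ ω : Measure ℝ) : ℝ≥0∞ :=
  ⨆ (ℱ : Set DI) (h : ℝ → ℝ) (_ : MeasureTheory.MemLp h 2 σ) (_ : ∀ x, 0 ≤ h x),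
    (∑' F : ℱ, ∑' W : Mdeep r ε (F : DI),
      ((W : DI).poisson
          (((σ.withDensity fun y => ENNReal.ofReal (h y))).restrict ((F : DI).set)ᶜ)
        / ENNReal.ofReal (W : DI).len) ^ 2
        * ∫⁻ x in (W : DI).set,
            ENNReal.ofReal
              ((projId ω (corona ℱ (F : DI) ∩ {J : DI | J.set ⊆ (W : DI).set}) x) ^ 2) ∂ω)
      ^ (1/2 : ℝ) / eLpNorm h 2 σ

/-- stopping-time suprema `α_ℱ(F)` of averages of `|f|` -/
def alphaF (σ : Measure ℝ) (ℱ : Set DI) (f : ℝ → ℝ) (F : DI) : ℝ :=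
  ⨆ G : {G : DI // G ∈ ℱ ∧ F.set ⊆ G.set}, avg σ (G : DI).set (fun x => |f x|)

/-- projection `𝖯_F f = Σ_{K ⊆ F} Δ_K^σ f` (pointwise tsum) -/
def dyadicProj (σ : Measure ℝ) (F : DI) (f : ℝ → ℝ) : ℝ → ℝ :=
  fun x => ∑' K : {K : DI // K.set ⊆ F.set}, haar σ (K : DI) f x

/-- concentric triple 3K -/
def tripleSet (K : DI) : Set ℝ :=
  Set.Ico (K.center - 3/2 * K.len) (K.center + 3/2 * K.len)

/-- `K` is good, inside `S`, with triple inside `S` -/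
def goodTrip (r : ℕ) (ε : ℝ) (S K : DI) : Prop :=
  IsGood r ε K ∧ K.set ⊆ S.set ∧ tripleSet K ⊆ S.set

/-- `𝒲^trip(S) = {S} ∪ ℳ_good^trip(S)` -/
def Wtrip (r : ℕ) (ε : ℝ) (S : DI) : Set DI :=
  {S} ∪ {K | goodTrip r ε S K ∧ ∀ K' : DI, goodTrip r ε S K' → K.set ⊆ K'.set → K' = K}

/-- refined Poisson-Energy characteristic `PE_𝒜^{A,trip}(Λ; σ, ω)` -/
def PEtrip (r : ℕ) (ε : ℝ) (σ ω : Measure ℝ) (F A : DI) (𝒜 : Set DI) (Λ : Finset DI) : ℝ≥0∞ :=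
  ⨆ (S : DI) (_ : S ∈ fChildren 𝒜 A) (K : DI) (_ : K ∈ Wtrip r ε S),
    (K.poisson (σ.restrict (F.set \ S.set)) / ENNReal.ofReal K.len)
      * (∑ J ∈ Λ, if J.set ⊆ K.set then eLpNorm (haar ω J (fun z => z)) 2 ω ^ 2 else 0)
          ^ (1/2 : ℝ)
      / (σ K.set) ^ (1/2 : ℝ)

/-- Poisson-Energy characteristic `PE^F(𝒞; σ, ω)` -/
def PEchar (r : ℕ) (ε : ℝ) (σ ω : Measure ℝ) (F : DI) (𝒞 : Set DI) : ℝ≥0∞ :=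
  ⨆ (I : DI) (_ : I ∈ 𝒞) (_ : IsGood r ε I),
    I.poisson (σ.restrict (F.set \ I.set)) * (energySq ω I) ^ (1/2 : ℝ)
      * (ω I.set / σ I.set) ^ (1/2 : ℝ)

/-- dual integration operator `I*μ(α) = Σ_{β ⊆ α} μ(β)` -/
def Istar (μ : DI → ℝ) (α : DI) : ℝ := ∑ᶠ β ∈ {β : DI | β.set ⊆ α.set}, μ β

/-- the minimal intervals in the support of `μ` -/
def minSupp (μ : DI → ℝ) : Set DI :=
  {α | μ α ≠ 0 ∧ ∀ β : DI, μ β ≠ 0 → β.set ⊆ α.set → β = α}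

/-- `Σ_{β ∈ S, β ⊊ α} I*μ(β)` -/
def stopSum (μ : DI → ℝ) (S : Set DI) (α : DI) : ℝ :=
  ∑ᶠ β ∈ {β ∈ S | β.set ⊂ α.set}, Istar μ β

/-- stopping criterion relative to a previous antichain `S` -/
def stopProp (μ : DI → ℝ) (Γ : ℝ) (S : Set DI) (α : DI) : Prop :=
  Γ * stopSum μ S α < Istar μ α

/-- the minimal intervals in `𝒟(o)` satisfying the stopping criterion -/
def nextGen (μ : DI → ℝ) (Γ : ℝ) (o : DI) (S : Set DI) : Set DI :=
  {α | α.set ⊆ o.set ∧ stopProp μ Γ S α ∧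
    ∀ β : DI, β.set ⊆ o.set → stopProp μ Γ S β → β.set ⊆ α.set → β = α}

/-- `μ` is `Γ`-irreducible -/
def Irreducible' (μ : DI → ℝ) (Γ : ℝ) (o : DI) : Prop :=
  ¬ ∃ α : DI, α.set ⊆ o.set ∧ stopProp μ Γ (minSupp μ) α

/-- `α_A(S)` for the Stopping Child Lemma -/
def stopAlpha (σ : Measure ℝ) (r : ℕ) (ε : ℝ) (Λf : Finset DI) (f : ℝ → ℝ) (A S : DI) : ℝ :=
  ⨆ I : {I : DI // IsGood r ε I ∧ I.set ⊆ A.set ∧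
      ∃ I0 ∈ Λf, S.set ⊆ I0.set ∧ I0.set ⊂ I.set}, |avg σ (I : DI).set f|

def hker (t x y : ℝ) : ℝ := if t < |y - x| then (y - x)⁻¹ else 0

def hint (ν : Measure ℝ) (t x : ℝ) : ℝ := ∫ y, hker t x y ∂ν

lemma hker_meas2 (t : ℝ) : Measurable (fun p : ℝ × ℝ => hker t p.1 p.2) := by
  unfold hker
  refine Measurable.ite ?_ (by fun_prop) measurable_const
  exact measurableSet_lt measurable_const (by fun_prop)

lemma hker_meas (t x : ℝ) : Measurable (hker t x) :=
  (hker_meas2 t).comp (measurable_const.prodMk measurable_id)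

lemma hker_bound {t : ℝ} (ht : 0 < t) (x y : ℝ) : |hker t x y| ≤ t⁻¹ := by
  unfold hker
  split_ifs with h
  · rw [abs_inv]; gcongr
  · simp; exact ht.le

lemma hker_int (ν : Measure ℝ) [IsFiniteMeasure ν] {t : ℝ} (ht : 0 < t) (x : ℝ) :
    Integrable (hker t x) ν :=
  Integrable.of_bound (hker_meas t x).aestronglyMeasurable t⁻¹
    (Filter.Eventually.of_forall fun y => hker_bound ht x y)

lemma hint_meas (ν : Measure ℝ) [SFinite ν] (t : ℝ) : Measurable (hint ν t) :=
  ((hker_meas2 t).stronglyMeasurable.integral_prod_right (ν := ν)).measurable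

lemma sq_sub_le (u v : ℝ) : ENNReal.ofReal ((u - v) ^ 2) ≤
    2 * ENNReal.ofReal (u ^ 2) + 2 * ENNReal.ofReal (v ^ 2) := by
  have h2 : (2:ℝ≥0∞) = ENNReal.ofReal 2 := by simp
  rw [h2, ← ENNReal.ofReal_mul (by norm_num), ← ENNReal.ofReal_mul (by norm_num),
    ← ENNReal.ofReal_add (by positivity) (by positivity)]
  apply ENNReal.ofReal_le_ofReal
  nlinarith [sq_nonneg (u + v)]

lemma core_lim (ν : Measure ℝ) [IsFiniteMeasure ν] (a b c l : ℝ) (hl : 0 < l)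
    (hν : ∀ᵐ y ∂ν, y ∉ Ico a b) (hc : ∀ x ∈ Ico a b, |x - c| ≤ l)
    (t : ℕ → ℝ) (ht : ∀ n, 0 < t n) (ht0 : Filter.Tendsto t Filter.atTop (nhds 0))
    (x x' : ℝ) (hx : x ∈ Ico a b) (hx' : x' ∈ Ico a b) (hxx : x < x') :
    ENNReal.ofReal (((x' - x) * ∫ y, ((l + |y - c|) ^ 2)⁻¹ ∂ν) ^ 2) ≤
      Filter.liminf (fun n => ENNReal.ofReal ((hint ν (t n) x' - hint ν (t n) x) ^ 2))
        Filter.atTop := by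
  set K : ℝ → ℝ := fun y => (x' - x) * ((l + |y - c|) ^ 2)⁻¹ with hK
  have hd : 0 < x' - x := by linarith
  have hKm : Measurable K := by rw [hK]; fun_prop
  have hK0 : ∀ y, 0 ≤ K y := fun y => by simp only [hK]; positivity
  have hKb : ∀ y, K y ≤ (x' - x) * (l ^ 2)⁻¹ := fun y => by
    simp only [hK]
    have : 0 ≤ |y - c| := abs_nonneg _
    gcongr; linarith
  set f : ℕ → ℝ → ℝ := fun n y => hker (t n) x' y - hker (t n) x y with hf
  have hfm : ∀ n, Measurable (f n) := fun n => (hker_meas _ _).sub (hker_meas _ _)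
  have hfi : ∀ n, Integrable (f n) ν := fun n => (hker_int ν (ht n) x').sub (hker_int ν (ht n) x)
  set M := (x' - x)⁻¹ + (x' - x) * (l ^ 2)⁻¹ with hM
  have hM0 : 0 ≤ (x' - x)⁻¹ := by positivity
  have hM1 : 0 ≤ (x' - x) * (l ^ 2)⁻¹ := by positivity
  -- exact kernel comparison
  have exact_cmp : ∀ y, y ∉ Ico a b → y ≠ x → K y ≤ (y - x')⁻¹ - (y - x)⁻¹ := by
    intro y hy hyx
    have hyx' : y ≠ x' := fun h => hy (h ▸ hx')
    have h1 : y - x ≠ 0 := sub_ne_zero.2 hyx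
    have h2 : y - x' ≠ 0 := sub_ne_zero.2 hyx'
    have hprod : 0 < (y - x') * (y - x) := by
      by_cases hya : y < a
      · exact mul_pos_of_neg_of_neg (by linarith [hx'.1]) (by linarith [hx.1])
      · have : b ≤ y := by
          by_contra hb; exact hy ⟨not_lt.1 hya, not_le.1 hb⟩
        exact mul_pos (by linarith [hx'.2]) (by linarith [hx.2])
    have e : (y - x')⁻¹ - (y - x)⁻¹ = (x' - x) * ((y - x') * (y - x))⁻¹ := by
      field_simp; ring
    rw [e]; simp only [hK]
    have b1 : |y - x'| ≤ l + |y - c| := by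
      have := abs_sub_le y c x'
      have h3 := hc x' hx'
      rw [abs_sub_comm c x'] at this; linarith
    have b2 : |y - x| ≤ l + |y - c| := by
      have := abs_sub_le y c x
      have h3 := hc x hx
      rw [abs_sub_comm c x] at this; linarith
    have : (y - x') * (y - x) ≤ (l + |y - c|) ^ 2 := by
      rw [← abs_of_pos hprod, abs_mul, sq]
      gcongr
    gcongr
  have hbd : ∀ᶠ n in Filter.atTop, ∀ᵐ y ∂ν, ‖min (f n y) (K y)‖ ≤ M := by
    have e1 := ht0.eventually (gt_mem_nhds hd)
    have e2 := ht0.eventually (gt_mem_nhds (sub_pos.2 hx'.2))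
    filter_upwards [e1, e2] with n h1 h2
    filter_upwards [hν] with y hy
    have hlow : -(x' - x)⁻¹ ≤ f n y := by
      by_cases hya : y < a
      · have hx1 := hx.1
        have : t n < |y - x'| := by rw [abs_of_neg] <;> linarith
        simp only [hf, hker, if_pos this]
        have hi : (x' - y)⁻¹ ≤ (x' - x)⁻¹ := by gcongr; linarith
        have hi2 : (y - x')⁻¹ = -(x' - y)⁻¹ := by rw [← inv_neg]; ring_nf
        have hi3 : (y - x)⁻¹ ≤ 0 := inv_nonpos.2 (by linarith)
        split_ifs <;> linarith
      · have hyb : b ≤ y := by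
          by_contra hb; exact hy ⟨not_lt.1 hya, not_le.1 hb⟩
        have g1 : t n < |y - x'| := by rw [abs_of_pos] <;> linarith [hx'.2]
        have g2 : t n < |y - x| := by rw [abs_of_pos] <;> linarith [hx'.2]
        have := exact_cmp y hy (by rintro rfl; exact absurd hx hy)
        simp only [hf, hker, if_pos g1, if_pos g2]
        linarith [hK0 y]
    rw [Real.norm_eq_abs, abs_le]
    constructor
    · apply le_min <;> linarith [hK0 y]
    · exact (min_le_right _ _).trans (by linarith [hKb y])
  have hlim : ∀ᵐ y ∂ν, Filter.Tendsto (fun n => min (f n y) (K y)) Filter.atTop (nhds (K y)) := by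
    filter_upwards [hν] with y hy
    have hyx : y ≠ x := fun h => hy (h ▸ hx)
    have hyx' : y ≠ x' := fun h => hy (h ▸ hx')
    have e1 := ht0.eventually (gt_mem_nhds (abs_pos.2 (sub_ne_zero.2 hyx)))
    have e2 := ht0.eventually (gt_mem_nhds (abs_pos.2 (sub_ne_zero.2 hyx')))
    apply tendsto_const_nhds.congr'
    filter_upwards [e1, e2] with n h1 h2
    simp only [hf, hker, if_pos h1, if_pos h2]
    exact (min_eq_right (exact_cmp y hy hyx)).symm
  have hT : Filter.Tendsto (fun n => ∫ y, min (f n y) (K y) ∂ν) Filter.atTop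
      (nhds (∫ y, K y ∂ν)) :=
    tendsto_integral_filter_of_dominated_convergence (fun _ => M)
      (Filter.Eventually.of_forall fun n => ((hfm n).min hKm).aestronglyMeasurable) hbd
      (integrable_const _) hlim
  have hKI : ∫ y, K y ∂ν = (x' - x) * ∫ y, ((l + |y - c|) ^ 2)⁻¹ ∂ν := integral_const_mul _ _
  have hKint : Integrable K ν := Integrable.of_bound hKm.aestronglyMeasurable
    ((x' - x) * (l ^ 2)⁻¹) (Filter.Eventually.of_forall fun y => by
      rw [Real.norm_eq_abs, abs_of_nonneg (hK0 y)]; exact hKb y)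
  rw [← hKI]
  have hT2 : Filter.Tendsto (fun n => ENNReal.ofReal ((max (∫ y, min (f n y) (K y) ∂ν) 0) ^ 2))
      Filter.atTop (nhds (ENNReal.ofReal ((∫ y, K y ∂ν) ^ 2))) := by
    apply ENNReal.tendsto_ofReal
    have := (hT.max (tendsto_const_nhds (x := (0:ℝ)))).pow 2
    rwa [max_eq_left (integral_nonneg hK0)] at this
  rw [← hT2.liminf_eq]
  refine Filter.liminf_le_liminf (Filter.Eventually.of_forall fun n => ?_)
  apply ENNReal.ofReal_le_ofReal
  have e : hint ν (t n) x' - hint ν (t n) x = ∫ y, f n y ∂ν :=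
    (integral_sub (hker_int ν (ht n) x') (hker_int ν (ht n) x)).symm
  rw [e]
  have hle : ∫ y, min (f n y) (K y) ∂ν ≤ ∫ y, f n y ∂ν :=
    integral_mono ((hfi n).inf hKint) (hfi n) fun y => min_le_left _ _
  rcases le_total (∫ y, min (f n y) (K y) ∂ν) 0 with h | h
  · rw [max_eq_right h, zero_pow two_ne_zero]; exact sq_nonneg _
  · rw [max_eq_left h]; gcongr

lemma core_lim' (ν : Measure ℝ) [IsFiniteMeasure ν] (a b c l : ℝ) (hl : 0 < l)
    (hν : ∀ᵐ y ∂ν, y ∉ Ico a b) (hc : ∀ x ∈ Ico a b, |x - c| ≤ l)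
    (t : ℕ → ℝ) (ht : ∀ n, 0 < t n) (ht0 : Filter.Tendsto t Filter.atTop (nhds 0))
    (x x' : ℝ) (hx : x ∈ Ico a b) (hx' : x' ∈ Ico a b) :
    ENNReal.ofReal (((x' - x) * ∫ y, ((l + |y - c|) ^ 2)⁻¹ ∂ν) ^ 2) ≤
      Filter.liminf (fun n => ENNReal.ofReal ((hint ν (t n) x' - hint ν (t n) x) ^ 2))
        Filter.atTop := by
  rcases lt_trichotomy x x' with h | h | h
  · exact core_lim ν a b c l hl hν hc t ht ht0 x x' hx hx' h
  · simp [h]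
  · have := core_lim ν a b c l hl hν hc t ht ht0 x' x hx' hx h
    convert this using 1
    · congr 1; ring
    · congr 1; funext n; congr 1; ring

lemma var_le (μ : Measure ℝ) [IsFiniteMeasure μ] (hi : Integrable (fun x : ℝ => x) μ)
    (hi2 : Integrable (fun x : ℝ => x ^ 2) μ) (z : ℝ) :
    ∫⁻ x, ENNReal.ofReal ((x - (∫ x, x ∂μ) / (μ univ).toReal) ^ 2) ∂μ ≤
      ∫⁻ x, ENNReal.ofReal ((x - z) ^ 2) ∂μ := by
  by_cases h0 : μ = 0
  · simp [h0]
  set m := (μ univ).toReal with hm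
  have hm0 : 0 < m := ENNReal.toReal_pos (by simpa using h0) (measure_ne_top _ _)
  have key : ∀ w : ℝ, Integrable (fun x => (x - w) ^ 2) μ ∧
      ∫ x, (x - w) ^ 2 ∂μ = ∫ x, x ^ 2 ∂μ - 2 * w * ∫ x, x ∂μ + m * w ^ 2 := by
    intro w
    have e : (fun x : ℝ => (x - w) ^ 2) = fun x => (x ^ 2 - (2 * w) * x) + w ^ 2 := by
      funext x; ring
    have i1 : Integrable (fun x : ℝ => x ^ 2 - (2 * w) * x) μ := hi2.sub (hi.const_mul (2 * w))
    rw [e]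
    refine ⟨i1.add (integrable_const _), ?_⟩
    rw [integral_add i1 (integrable_const _), integral_sub hi2 (hi.const_mul _),
      integral_const_mul]
    simp [hm, Measure.real]
  rw [← ofReal_integral_eq_lintegral_ofReal (key _).1 (Filter.Eventually.of_forall fun x => sq_nonneg _),
    ← ofReal_integral_eq_lintegral_ofReal (key _).1 (Filter.Eventually.of_forall fun x => sq_nonneg _)]
  apply ENNReal.ofReal_le_ofReal
  rw [(key _).2, (key _).2]
  set A := ∫ x, x ∂μ
  have : m * (z - A / m) ^ 2 ≥ 0 := by positivity
  have e : m * (z - A / m) ^ 2 = (m * z ^ 2 - 2 * z * A) - (- 2 * (A / m) * A + m * (A / m) ^ 2) := by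
    field_simp; ring
  linarith

lemma var_energy (ν μ : Measure ℝ) [IsFiniteMeasure ν] [IsFiniteMeasure μ] (a b c l : ℝ)
    (hl : 0 < l)
    (hν : ∀ᵐ y ∂ν, y ∉ Ico a b) (hμ : ∀ᵐ y ∂μ, y ∈ Ico a b) (hc : ∀ x ∈ Ico a b, |x - c| ≤ l)
    (t : ℕ → ℝ) (ht : ∀ n, 0 < t n) (ht0 : Filter.Tendsto t Filter.atTop (nhds 0)) :
    (∫⁻ x, ENNReal.ofReal ((x - (∫ x, x ∂μ) / (μ univ).toReal) ^ 2) ∂μ) *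
      ENNReal.ofReal ((∫ y, ((l + |y - c|) ^ 2)⁻¹ ∂ν) ^ 2) ≤
      4 * Filter.liminf (fun n => ∫⁻ x, ENNReal.ofReal ((hint ν (t n) x) ^ 2) ∂μ)
        Filter.atTop := by
  by_cases h0 : μ = 0
  · simp [h0]
  have hbd : ∀ᵐ y ∂μ, ‖y‖ ≤ |c| + l := by
    filter_upwards [hμ] with y hy
    have := hc y hy
    have h2 := abs_add_le (y - c) c
    rw [sub_add_cancel] at h2
    rw [Real.norm_eq_abs]; linarith
  have hi : Integrable (fun x : ℝ => x) μ :=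
    Integrable.of_bound measurable_id.aestronglyMeasurable _ hbd
  have hi2 : Integrable (fun x : ℝ => x ^ 2) μ := by
    refine Integrable.of_bound (by fun_prop) ((|c| + l) ^ 2) ?_
    filter_upwards [hbd] with y hy
    rw [norm_pow]; gcongr
  set p := ∫ y, ((l + |y - c|) ^ 2)⁻¹ ∂ν
  set V := ∫⁻ x, ENNReal.ofReal ((x - (∫ x, x ∂μ) / (μ univ).toReal) ^ 2) ∂μ
  set A : ℕ → ℝ≥0∞ := fun n => ∫⁻ x, ENNReal.ofReal ((hint ν (t n) x) ^ 2) ∂μ with hA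
  set m := μ univ with hm
  have hm0 : m ≠ 0 := by simpa [hm] using h0
  have hmt : m ≠ ⊤ := measure_ne_top _ _
  have hmeas : ∀ n, Measurable (fun x => ENNReal.ofReal ((hint ν (t n) x) ^ 2)) := fun n =>
    ((hint_meas ν (t n)).pow_const 2).ennreal_ofReal
  have step1 : ∀ z ∈ Ico a b, V * ENNReal.ofReal (p ^ 2) ≤
      Filter.liminf (fun n => 2 * A n + 2 * m * ENNReal.ofReal ((hint ν (t n) z) ^ 2))
        Filter.atTop := by
    intro z hz
    calc V * ENNReal.ofReal (p ^ 2)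
        ≤ (∫⁻ x, ENNReal.ofReal ((x - z) ^ 2) ∂μ) * ENNReal.ofReal (p ^ 2) := by
          gcongr; exact var_le μ hi hi2 z
      _ = ∫⁻ x, ENNReal.ofReal (((x - z) * p) ^ 2) ∂μ := by
          rw [← lintegral_mul_const _ (by fun_prop)]
          congr 1; funext x
          rw [← ENNReal.ofReal_mul (sq_nonneg _), mul_pow]
      _ ≤ ∫⁻ x, Filter.liminf (fun n => ENNReal.ofReal ((hint ν (t n) x - hint ν (t n) z) ^ 2))
            Filter.atTop ∂μ := by
          apply lintegral_mono_ae
          filter_upwards [hμ] with x hx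
          exact core_lim' ν a b c l hl hν hc t ht ht0 z x hz hx
      _ ≤ Filter.liminf (fun n => ∫⁻ x, ENNReal.ofReal ((hint ν (t n) x - hint ν (t n) z) ^ 2) ∂μ)
            Filter.atTop := lintegral_liminf_le fun n =>
              (((hint_meas ν (t n)).sub_const _).pow_const 2).ennreal_ofReal
      _ ≤ _ := by
          refine Filter.liminf_le_liminf (Filter.Eventually.of_forall fun n => ?_)
          calc ∫⁻ x, ENNReal.ofReal ((hint ν (t n) x - hint ν (t n) z) ^ 2) ∂μ
              ≤ ∫⁻ x, (2 * ENNReal.ofReal ((hint ν (t n) x) ^ 2)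
                  + 2 * ENNReal.ofReal ((hint ν (t n) z) ^ 2)) ∂μ := by
                apply lintegral_mono
                intro x
                exact sq_sub_le _ _
            _ = _ := by
                rw [lintegral_add_right _ measurable_const, lintegral_const_mul _ (hmeas n),
                  lintegral_const]
                ring
  have step2 : V * ENNReal.ofReal (p ^ 2) * m ≤ Filter.liminf (fun n => 4 * m * A n) Filter.atTop := by
    calc V * ENNReal.ofReal (p ^ 2) * m = ∫⁻ z, V * ENNReal.ofReal (p ^ 2) ∂μ := by
          rw [lintegral_const]
      _ ≤ ∫⁻ z, Filter.liminf (fun n => 2 * A n + 2 * m * ENNReal.ofReal ((hint ν (t n) z) ^ 2))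
        Filter.atTop ∂μ := by
          apply lintegral_mono_ae
          filter_upwards [hμ] with z hz using step1 z hz
      _ ≤ Filter.liminf (fun n => ∫⁻ z, (2 * A n + 2 * m * ENNReal.ofReal ((hint ν (t n) z) ^ 2)) ∂μ)
        Filter.atTop := lintegral_liminf_le fun n => measurable_const.add ((hmeas n).const_mul _)
      _ = _ := by
          congr 1; funext n
          rw [lintegral_add_left measurable_const, lintegral_const, lintegral_const_mul _ (hmeas n)]
          change 2 * A n * m + 2 * m * A n = _
          ring
  rw [ENNReal.liminf_const_mul_of_ne_top (by finiteness)] at step2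
  have : V * ENNReal.ofReal (p ^ 2) * m ≤ (4 * Filter.liminf A Filter.atTop) * m := by
    calc _ ≤ _ := step2
      _ = _ := by ring
  exact (ENNReal.mul_le_mul_iff_left hm0 hmt).1 this

lemma Htr_eq (σ : Measure ℝ) {S : Set ℝ} (hS : MeasurableSet S) (t x : ℝ) :
    Htr σ (S.indicator 1) t x = hint (σ.restrict S) t x := by
  unfold Htr hint
  have hm : MeasurableSet {y : ℝ | t < |y - x|} := measurableSet_lt measurable_const (by fun_prop)
  rw [← integral_indicator hm, ← integral_indicator hS]
  congr 1; funext y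
  by_cases h1 : t < |y - x| <;> by_cases h2 : y ∈ S <;> simp [indicator, hker, h1, h2]

lemma test_bound (σ ω : Measure ℝ) [IsLocallyFiniteMeasure σ] {a b t : ℝ} (hab : a < b)
    (ht : 0 < t) :
    ∫⁻ x, ENNReal.ofReal ((hint (σ.restrict (Ico a b)) t x) ^ 2) ∂ω ≤
      testH σ ω ^ 2 * σ (Ico a b) := by
  by_cases h0 : σ (Ico a b) = 0
  · have : σ.restrict (Ico a b) = 0 := Measure.restrict_eq_zero.2 h0
    simp [this, hint]
  have hfin : σ (Ico a b) ≠ ⊤ := measure_Ico_lt_top.ne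
  have h1 : eLpNorm (Htr σ ((Set.Ico a b).indicator 1) t) 2 ω / (σ (Set.Ico a b)) ^ (1/2 : ℝ)
      ≤ testH σ ω := by
    unfold testH
    exact le_iSup_of_le a (le_iSup_of_le b (le_iSup_of_le hab (le_iSup_of_le t
      (le_iSup_of_le ht le_rfl))))
  have h2 : eLpNorm (Htr σ ((Set.Ico a b).indicator 1) t) 2 ω ≤
      testH σ ω * (σ (Set.Ico a b)) ^ (1/2 : ℝ) := by
    rwa [ENNReal.div_le_iff] at h1
    · simp [ENNReal.rpow_eq_zero_iff, h0]
    · exact ENNReal.rpow_ne_top_of_nonneg (by norm_num) hfin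
  have h3 : Htr σ ((Set.Ico a b).indicator 1) t = hint (σ.restrict (Ico a b)) t :=
    funext fun x => Htr_eq σ measurableSet_Ico t x
  rw [h3] at h2
  have h4 := eLpNorm_nnreal_pow_eq_lintegral (f := hint (σ.restrict (Ico a b)) t) (μ := ω)
    (p := 2) two_ne_zero
  have h5 : ∫⁻ x, ENNReal.ofReal ((hint (σ.restrict (Ico a b)) t x) ^ 2) ∂ω =
      eLpNorm (hint (σ.restrict (Ico a b)) t) 2 ω ^ 2 := by
    have h4' : eLpNorm (hint (σ.restrict (Ico a b)) t) 2 ω ^ (2:ℝ) =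
      ∫⁻ x, ‖hint (σ.restrict (Ico a b)) t x‖ₑ ^ (2:ℝ) ∂ω := by simpa using h4
    rw [← ENNReal.rpow_two, h4']
    congr 1; funext x
    rw [ENNReal.rpow_two, Real.enorm_eq_ofReal_abs, ← ENNReal.ofReal_pow (abs_nonneg _), sq_abs]
  rw [h5]
  calc _ ≤ (testH σ ω * (σ (Set.Ico a b)) ^ (1/2 : ℝ)) ^ 2 := by gcongr
    _ = _ := by
      rw [mul_pow, ← ENNReal.rpow_two ((σ (Set.Ico a b)) ^ (1/2 : ℝ)), ← ENNReal.rpow_mul]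
      norm_num

lemma DI_lt (J : DI) : J.lo < J.hi := by
  have : (0:ℝ) < 2 ^ J.k := by positivity
  unfold DI.lo DI.hi; nlinarith

lemma DI_len_pos (J : DI) : 0 < J.len := by unfold DI.len; positivity

lemma DI_set (J : DI) : J.set = Ico J.lo J.hi := rfl

lemma DI_center (J : DI) : ∀ x ∈ Ico J.lo J.hi, |x - J.center| ≤ J.len := by
  intro x hx
  have : (0:ℝ) < 2 ^ J.k := by positivity
  unfold DI.lo DI.hi at hx
  unfold DI.center DI.len
  rw [abs_le]; constructor <;> nlinarith [hx.1, hx.2]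

instance : Countable DI := by
  have : Function.Injective (fun I : DI => (I.k, I.n)) := by
    rintro ⟨k, n⟩ ⟨k', n'⟩ h
    simpa using h
  exact this.countable

lemma energy_term (σ ω : Measure ℝ) [IsLocallyFiniteMeasure σ] [IsLocallyFiniteMeasure ω]
    (a b : ℝ) (J : DI)
    (t : ℕ → ℝ) (ht : ∀ n, 0 < t n) (ht0 : Filter.Tendsto t Filter.atTop (nhds 0)) :
    J.poisson (σ.restrict (Ico a b \ J.set)) ^ 2 * energySq ω J * ω J.set ≤
      4 * Filter.liminf (fun n => ∫⁻ x in J.set,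
        ENNReal.ofReal ((hint (σ.restrict (Ico a b \ J.set)) (t n) x) ^ 2) ∂ω) Filter.atTop := by
  have hJm : MeasurableSet J.set := measurableSet_Ico
  have hJf : ω J.set < ⊤ := measure_Ico_lt_top
  set ν := σ.restrict (Ico a b \ J.set) with hνd
  have f1 : IsFiniteMeasure ν := ⟨by
    rw [hνd, Measure.restrict_apply_univ]
    exact (measure_mono diff_subset).trans_lt measure_Ico_lt_top⟩
  have f2 : IsFiniteMeasure (ω.restrict J.set) := ⟨by
    rw [Measure.restrict_apply_univ]; exact hJf⟩
  have hl := DI_len_pos J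
  have key := var_energy ν (ω.restrict J.set) J.lo J.hi J.center J.len hl
    (by
      filter_upwards [ae_restrict_mem (measurableSet_Ico.diff hJm)] with y hy
      exact hy.2)
    (by filter_upwards [ae_restrict_mem hJm] with y hy using hy) (DI_center J) t ht ht0
  refine le_trans (le_of_eq_of_le ?_ key) le_rfl
  by_cases h0 : ω J.set = 0
  · have : ω.restrict J.set = 0 := Measure.restrict_eq_zero.2 h0
    simp [h0, this]
  have hP : J.poisson ν = ENNReal.ofReal J.len *
      ENNReal.ofReal (∫ y, ((J.len + |y - J.center|) ^ 2)⁻¹ ∂ν) := by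
    unfold DI.poisson poissonI
    have hint1 : Integrable (fun y => ((J.len + |y - J.center|) ^ 2)⁻¹) ν := by
      refine Integrable.of_bound (by fun_prop) ((J.len ^ 2)⁻¹)
        (Filter.Eventually.of_forall fun y => ?_)
      have : 0 ≤ |y - J.center| := abs_nonneg _
      rw [Real.norm_eq_abs, abs_of_nonneg (by positivity)]
      gcongr; linarith
    rw [ofReal_integral_eq_lintegral_ofReal hint1
      (Filter.Eventually.of_forall fun y => by positivity),
      ← lintegral_const_mul _ (by fun_prop)]
    congr 1; funext y
    rw [← ENNReal.ofReal_mul hl.le, div_eq_mul_inv]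
  rw [hP]
  unfold energySq avg
  rw [Measure.restrict_apply_univ]
  set V := ∫⁻ x in J.set, ENNReal.ofReal ((x - (∫ x in J.set, x ∂ω) / (ω J.set).toReal) ^ 2) ∂ω
  have hp0 : 0 ≤ ∫ y, ((J.len + |y - J.center|) ^ 2)⁻¹ ∂ν :=
    integral_nonneg fun y => by positivity
  rw [ENNReal.ofReal_pow hp0, ENNReal.ofReal_pow hl.le]
  have hL0 : ENNReal.ofReal J.len ≠ 0 := by simpa using hl
  generalize ENNReal.ofReal (∫ y, ((J.len + |y - J.center|) ^ 2)⁻¹ ∂ν) = q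
  have hL2 : ENNReal.ofReal J.len ^ 2 ≠ 0 := pow_ne_zero _ hL0
  have hLt : ENNReal.ofReal J.len ^ 2 ≠ ⊤ := by finiteness
  generalize ENNReal.ofReal J.len = L at *
  generalize ω J.set = m at *
  rw [mul_pow, div_eq_mul_inv, ENNReal.mul_inv (Or.inl h0) (Or.inl hJf.ne)]
  calc L ^ 2 * q ^ 2 * (V * (m⁻¹ * (L ^ 2)⁻¹)) * m
      = V * q ^ 2 * (m * m⁻¹) * (L ^ 2 * (L ^ 2)⁻¹) := by ring
    _ = V * q ^ 2 := by
      rw [ENNReal.mul_inv_cancel h0 hJf.ne, ENNReal.mul_inv_cancel hL2 hLt]; simp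

lemma split_term (σ ω : Measure ℝ) [IsLocallyFiniteMeasure σ] 
    (a b : ℝ) (J : DI) (hJ : J.set ⊆ Ico a b) {t : ℝ} (ht : 0 < t) :
    ∫⁻ x in J.set, ENNReal.ofReal ((hint (σ.restrict (Ico a b \ J.set)) t x) ^ 2) ∂ω ≤
      2 * (∫⁻ x in J.set, ENNReal.ofReal ((hint (σ.restrict (Ico a b)) t x) ^ 2) ∂ω) +
      2 * (testH σ ω ^ 2 * σ J.set) := by
  have hJm : MeasurableSet J.set := measurableSet_Ico
  have f0 : IsFiniteMeasure (σ.restrict (Ico a b)) := ⟨by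
    rw [Measure.restrict_apply_univ]; exact measure_Ico_lt_top⟩
  have f1 : IsFiniteMeasure (σ.restrict (Ico a b \ J.set)) := ⟨by
    rw [Measure.restrict_apply_univ]
    exact (measure_mono diff_subset).trans_lt measure_Ico_lt_top⟩
  have f2 : IsFiniteMeasure (σ.restrict J.set) := ⟨by
    rw [Measure.restrict_apply_univ]; exact (measure_mono hJ).trans_lt measure_Ico_lt_top⟩
  have e : σ.restrict (Ico a b) = σ.restrict J.set + σ.restrict (Ico a b \ J.set) := by
    have := Measure.restrict_inter_add_diff (μ := σ) (Ico a b) hJm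
    rw [inter_eq_self_of_subset_right hJ] at this
    exact this.symm
  have h : ∀ x, hint (σ.restrict (Ico a b \ J.set)) t x =
      hint (σ.restrict (Ico a b)) t x - hint (σ.restrict J.set) t x := by
    intro x
    unfold hint
    rw [e, integral_add_measure (hker_int _ ht x) (hker_int _ ht x)]
    ring
  have hm : ∀ (ν : Measure ℝ) [IsFiniteMeasure ν],
      Measurable (fun x => ENNReal.ofReal ((hint ν t x) ^ 2)) := fun ν _ =>
    ((hint_meas ν t).pow_const 2).ennreal_ofReal
  calc _ ≤ ∫⁻ x in J.set, (2 * ENNReal.ofReal ((hint (σ.restrict (Ico a b)) t x) ^ 2) +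
        2 * ENNReal.ofReal ((hint (σ.restrict J.set) t x) ^ 2)) ∂ω := by
        apply lintegral_mono; intro x
        simp only [h]
        exact sq_sub_le _ _
    _ = 2 * (∫⁻ x in J.set, ENNReal.ofReal ((hint (σ.restrict (Ico a b)) t x) ^ 2) ∂ω) +
        2 * (∫⁻ x in J.set, ENNReal.ofReal ((hint (σ.restrict J.set) t x) ^ 2) ∂ω) := by
        rw [lintegral_add_left ((hm _).const_mul _), lintegral_const_mul _ (hm _),
          lintegral_const_mul _ (hm _)]
    _ ≤ _ := by
        gcongr
        exact (setLIntegral_le_lintegral _ _).trans (test_bound σ ω (DI_lt J) ht)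

lemma tsum_liminf_le' {ι : Type*} (u : ℕ → ι → ℝ≥0∞) :
    ∑' i, Filter.liminf (fun n => u n i) Filter.atTop ≤
      Filter.liminf (fun n => ∑' i, u n i) Filter.atTop := by
  letI : MeasurableSpace ι := ⊤
  have := lintegral_liminf_le (μ := Measure.count) (f := u) (u := Filter.atTop) (fun n => measurable_from_top)
  simpa only [lintegral_count] using this

lemma energy_le (σ ω : Measure ℝ) [IsLocallyFiniteMeasure σ] [IsLocallyFiniteMeasure ω] :
    energyCharSq σ ω ≤ 16 * testH σ ω ^ 2 := by
  unfold energyCharSq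
  refine iSup_le fun a => iSup_le fun b => iSup_le fun hab => iSup_le fun S => iSup_le fun hS =>
    iSup_le fun hd => ENNReal.div_le_of_le_mul ?_
  set t : ℕ → ℝ := fun n => 1 / ((n:ℝ) + 1) with htd
  have ht : ∀ n, 0 < t n := fun n => by simp only [htd]; positivity
  have ht0 : Filter.Tendsto t Filter.atTop (nhds 0) := tendsto_one_div_add_atTop_nhds_zero_nat
  have hdisj : Pairwise (Function.onFun Disjoint (fun I : S => (I : DI).set)) := by
    intro I I' hne
    exact hd I.2 I'.2 (fun h => hne (Subtype.ext h))
  have hms : ∀ I : S, MeasurableSet (I : DI).set := fun I => measurableSet_Ico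
  have hsub : (⋃ I : S, (I : DI).set) ⊆ Ico a b := iUnion_subset fun I => hS I I.2
  set A : ℕ → S → ℝ≥0∞ := fun n I => ∫⁻ x in (I : DI).set,
        ENNReal.ofReal ((hint (σ.restrict (Ico a b \ (I : DI).set)) (t n) x) ^ 2) ∂ω with hA
  have hn : ∀ n, ∑' I : S, A n I ≤ 4 * (testH σ ω ^ 2 * σ (Ico a b)) := by
    intro n
    calc ∑' I : S, A n I
        ≤ ∑' I : S, (2 * (∫⁻ x in (I : DI).set,
            ENNReal.ofReal ((hint (σ.restrict (Ico a b)) (t n) x) ^ 2) ∂ω) +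
            2 * (testH σ ω ^ 2 * σ (I : DI).set)) :=
          ENNReal.tsum_le_tsum fun I => split_term σ ω a b I (hS I I.2) (ht n)
      _ = 2 * (∑' I : S, ∫⁻ x in (I : DI).set,
            ENNReal.ofReal ((hint (σ.restrict (Ico a b)) (t n) x) ^ 2) ∂ω) +
            2 * (testH σ ω ^ 2 * ∑' I : S, σ (I : DI).set) := by
          rw [ENNReal.tsum_add, ENNReal.tsum_mul_left, ENNReal.tsum_mul_left,
            ENNReal.tsum_mul_left]
      _ ≤ 2 * (testH σ ω ^ 2 * σ (Ico a b)) + 2 * (testH σ ω ^ 2 * σ (Ico a b)) := by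
          gcongr
          · rw [← lintegral_iUnion hms hdisj]
            exact (setLIntegral_le_lintegral _ _).trans (test_bound σ ω hab (ht n))
          · rw [← measure_iUnion hdisj hms]
            exact measure_mono hsub
      _ = _ := by ring
  calc _ ≤ ∑' I : S, 4 * Filter.liminf (fun n => A n I) Filter.atTop :=
        ENNReal.tsum_le_tsum fun I => energy_term σ ω a b I t ht ht0
    _ = 4 * ∑' I : S, Filter.liminf (fun n => A n I) Filter.atTop := ENNReal.tsum_mul_left
    _ ≤ 4 * Filter.liminf (fun n => ∑' I : S, A n I) Filter.atTop := by
        gcongr; exact tsum_liminf_le' A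
    _ ≤ 4 * Filter.liminf (fun _ : ℕ => 4 * (testH σ ω ^ 2 * σ (Ico a b))) Filter.atTop := by
        gcongr
        exact Filter.liminf_le_liminf (Filter.Eventually.of_forall hn)
    _ = _ := by
        rw [Filter.liminf_const]; ring

/-- Control of the energy characteristic by testing and offset A₂. -/
theorem statement17 :
    ∃ C : ℝ, 0 < C ∧
      ∀ (r : ℕ) (σ ω : Measure ℝ), IsLocallyFiniteMeasure σ → IsLocallyFiniteMeasure ω →
        energyCharSq σ ω ≤ ENNReal.ofReal C * (testH σ ω ^ 2 + A2offset r σ ω) := by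
  refine ⟨16, by norm_num, ?_⟩
  intro r σ ω h1 h2
  refine (energy_le σ ω).trans ?_
  rw [show ENNReal.ofReal 16 = 16 by simp]
  gcongr
  exact le_self_add

end
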